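/- arXiv:1709.00210 — 2 statements merged into one kernel-verified Lean document; each statement's English description precedes it below -/
import Mathlib

section
/- Let 0 < α < 1, let A be a real s×s matrix all of whose (complex) eigenvalues λ satisfy λ ≠ 0 and |arg λ| > απ/2, let Q : [0,∞) → ℝ^{s×s} be continuous with sup_{t≥0} ‖Q(t)‖ < 1 / ( sup_{t≥0} t^{1-α} ∫₀^t (t-τ)^{α-1} ‖E_{α,α}((t-τ)^α A)‖ τ^{α-1} dτ ), and let g : [0,∞) → ℝ^s be continuous with sup_{t≥0} t^{1-α} ∫₀^t (t-τ)^{α-1} ‖E_{α,α}((t-τ)^α A) g(τ)‖ dτ < ∞. Then for every x₀ ∈ ℝ^s the unique solution φ of the integral equation φ(t) = t^{α-1} E_{α,α}(t^α A) x₀ + ∫₀^t (t-τ)^{α-1} E_{α,α}((t-τ)^α A) Q(τ) φ(τ) dτ + ∫₀^t (t-τ)^{α-1} E_{α,α}((t-τ)^α A) g(τ) dτ belongs to C⁰_{1-α}([0,∞), ℝ^s), and hence lim_{t→∞} φ(t) = 0. -/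
open Filter Topology MeasureTheory

attribute [local instance] Matrix.linftyOpNormedAddCommGroup Matrix.linftyOpNormedRing

/-- The matrix Mittag-Leffler function `E_{α,β}(B) = ∑ Bᵏ / Γ(αk + β)`. -/
noncomputable def ML {s : ℕ} (α β : ℝ) (B : Matrix (Fin s) (Fin s) ℝ) :
    Matrix (Fin s) (Fin s) ℝ :=
  ∑' k : ℕ, (Real.Gamma (α * k + β))⁻¹ • B ^ k

/-- Membership in `C⁰_{1-α}([0,∞), ℝ^s)`: continuous on `(0,∞)`, the limit
`lim_{t→0⁺} t^{1-α} x(t)` exists, and `sup_{t≥0} t^{1-α} ‖x(t)‖ < ∞`. -/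
def memC0inf (α : ℝ) {s : ℕ} (x : ℝ → (Fin s → ℝ)) : Prop :=
  ContinuousOn x (Set.Ioi 0) ∧
  (∃ l : Fin s → ℝ, Tendsto (fun t : ℝ => t ^ (1 - α) • x t) (𝓝[>] 0) (𝓝 l)) ∧
  (∃ C : ℝ, ∀ t : ℝ, 0 ≤ t → t ^ (1 - α) * ‖x t‖ ≤ C)

/-!
In the weighted unknown `y(t) = t ^ (1 - α) φ(t)` the equation becomes a fixed-point problem for
bounded continuous functions on `[0, ∞)`, and the assumption on `Q` says exactly that the integral
operator is a contraction with constant `c κ < 1`, where `κ` is the supremum of the weighted kernel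
mass. A bounded `y` then gives `φ(t) = O(t ^ (α - 1)) → 0`.

The free term is bounded because `κ` is finite: `E_{α,α}(B) = Γ(α)⁻¹ + B E_{α,2α}(B)`, and
`t ^ (2α - 1) E_{α,2α}(t ^ α A)` is the Riemann–Liouville integral of order `α` of
`t ^ (α - 1) E_{α,α}(t ^ α A)`, so that `t ^ α ‖E_{α,2α}(t ^ α A)‖ ≤ κ / Γ(α)`.
-/

section BetaIntegral

variable {E : Type*} [NormedAddCommGroup E] [NormedSpace ℝ E] {a b t : ℝ}

lemma integral_rpow_mul_sub_rpow_smul (ht : 0 < t) (f : ℝ → E) :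
    ∫ τ in (0 : ℝ)..t, (τ ^ (a - 1) * (t - τ) ^ (b - 1)) • f τ =
      t ^ (a + b - 1) • ∫ r in (0 : ℝ)..1, (r ^ (a - 1) * (1 - r) ^ (b - 1)) • f (t * r) := by
  have h_weight : ∀ r ∈ Set.uIcc (0 : ℝ) 1,
      ((t * r) ^ (a - 1) * (t - t * r) ^ (b - 1)) • f (t * r) =
        (t ^ (a - 1) * t ^ (b - 1)) • (r ^ (a - 1) * (1 - r) ^ (b - 1)) • f (t * r) := by
    intro r hr
    rw [Set.uIcc_of_le zero_le_one] at hr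
    rw [show t - t * r = t * (1 - r) by ring, Real.mul_rpow ht.le hr.1,
      Real.mul_rpow ht.le (sub_nonneg.2 hr.2), smul_smul]
    ring_nf
  have h_pow : t * (t ^ (a - 1) * t ^ (b - 1)) = t ^ (a + b - 1) := by
    nth_rw 1 [← Real.rpow_one t]
    rw [← Real.rpow_add ht, ← Real.rpow_add ht]
    ring_nf
  calc ∫ τ in (0 : ℝ)..t, (τ ^ (a - 1) * (t - τ) ^ (b - 1)) • f τ
      = t • ∫ r in (0 : ℝ)..1, ((t * r) ^ (a - 1) * (t - t * r) ^ (b - 1)) • f (t * r) := by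
        rw [intervalIntegral.smul_integral_comp_mul_left
          fun τ => (τ ^ (a - 1) * (t - τ) ^ (b - 1)) • f τ]
        simp only [mul_zero, mul_one]
    _ = _ := by
        rw [intervalIntegral.integral_congr h_weight, intervalIntegral.integral_smul, smul_smul,
          h_pow]

lemma ofReal_rpow_mul_one_sub_rpow {r : ℝ} (hr : r ∈ Set.Icc (0 : ℝ) 1) :
    ((r ^ (a - 1) * (1 - r) ^ (b - 1) : ℝ) : ℂ) =
      (r : ℂ) ^ ((a : ℂ) - 1) * (1 - (r : ℂ)) ^ ((b : ℂ) - 1) := by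
  rw [Complex.ofReal_mul, Complex.ofReal_cpow hr.1, Complex.ofReal_cpow (sub_nonneg.2 hr.2)]
  push_cast
  rfl

lemma intervalIntegrable_rpow_mul_one_sub_rpow (ha : 0 < a) (hb : 0 < b) :
    IntervalIntegrable (fun r : ℝ => r ^ (a - 1) * (1 - r) ^ (b - 1)) volume 0 1 := by
  have h := Complex.betaIntegral_convergent (u := a) (v := b) (by simpa) (by simpa)
  rw [intervalIntegrable_iff_integrableOn_Ioc_of_le zero_le_one] at h ⊢
  refine IntegrableOn.congr_fun h.re (fun r hr => ?_) measurableSet_Ioc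
  rw [← ofReal_rpow_mul_one_sub_rpow (Set.Ioc_subset_Icc_self hr)]
  exact Complex.ofReal_re _

lemma integral_rpow_mul_one_sub_rpow (ha : 0 < a) (hb : 0 < b) :
    ∫ r in (0 : ℝ)..1, r ^ (a - 1) * (1 - r) ^ (b - 1) =
      Real.Gamma a * Real.Gamma b / Real.Gamma (a + b) := by
  have h := Complex.betaIntegral_eq_Gamma_mul_div a b (by simpa) (by simpa)
  have h_congr : ∀ r ∈ Set.uIcc (0 : ℝ) 1, (r : ℂ) ^ ((a : ℂ) - 1) * (1 - (r : ℂ)) ^ ((b : ℂ) - 1) =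
      ((r ^ (a - 1) * (1 - r) ^ (b - 1) : ℝ) : ℂ) := fun r hr =>
    (ofReal_rpow_mul_one_sub_rpow (by rwa [Set.uIcc_of_le zero_le_one] at hr)).symm
  rw [Complex.betaIntegral, intervalIntegral.integral_congr h_congr,
    intervalIntegral.integral_ofReal, Complex.Gamma_ofReal, Complex.Gamma_ofReal,
    ← Complex.ofReal_add, Complex.Gamma_ofReal] at h
  exact_mod_cast h

lemma intervalIntegrable_rpow_mul_sub_rpow (ha : 0 < a) (hb : 0 < b) (ht : 0 ≤ t) :
    IntervalIntegrable (fun τ : ℝ => τ ^ (a - 1) * (t - τ) ^ (b - 1)) volume 0 t := by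
  rcases ht.eq_or_lt with rfl | ht
  · exact IntervalIntegrable.refl
  have h := ((intervalIntegrable_rpow_mul_one_sub_rpow ha hb).comp_mul_right
    (c := t⁻¹)).const_mul (t ^ (a - 1) * t ^ (b - 1))
  simp only [zero_div, one_div, inv_inv] at h
  refine h.congr fun τ hτ => ?_
  rw [Set.uIoc_of_le ht.le] at hτ
  have h_sub : 0 ≤ 1 - τ * t⁻¹ := by
    rw [sub_nonneg, ← div_eq_mul_inv, div_le_one ht]
    exact hτ.2
  calc t ^ (a - 1) * t ^ (b - 1) * ((τ * t⁻¹) ^ (a - 1) * (1 - τ * t⁻¹) ^ (b - 1))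
      = (t * (τ * t⁻¹)) ^ (a - 1) * (t * (1 - τ * t⁻¹)) ^ (b - 1) := by
        rw [Real.mul_rpow ht.le (by have := hτ.1; positivity), Real.mul_rpow ht.le h_sub]
        ring
    _ = τ ^ (a - 1) * (t - τ) ^ (b - 1) := by
        congr 2 <;> field_simp

lemma integral_rpow_mul_sub_rpow (ha : 0 < a) (hb : 0 < b) (ht : 0 < t) :
    ∫ τ in (0 : ℝ)..t, τ ^ (a - 1) * (t - τ) ^ (b - 1) =
      t ^ (a + b - 1) * (Real.Gamma a * Real.Gamma b / Real.Gamma (a + b)) := by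
  simpa only [smul_eq_mul, mul_one, integral_rpow_mul_one_sub_rpow ha hb] using
    integral_rpow_mul_sub_rpow_smul (a := a) (b := b) ht fun _ => (1 : ℝ)

end BetaIntegral

section GammaGrowth

lemma rpow_mul_exp_neg_le_Gamma {T x : ℝ} (hT : 0 < T) (hx : 1 ≤ x) :
    T ^ (x - 1) * Real.exp (-T) ≤ Real.Gamma x := by
  rw [Real.Gamma_eq_integral (by linarith)]
  have h_conv := Real.GammaIntegral_convergent (s := x) (by linarith)
  calc T ^ (x - 1) * Real.exp (-T) = ∫ t in Set.Ioi T, T ^ (x - 1) * Real.exp (-t) := by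
        rw [integral_const_mul, integral_exp_neg_Ioi]
    _ ≤ ∫ t in Set.Ioi T, Real.exp (-t) * t ^ (x - 1) := by
        refine setIntegral_mono_on ((integrableOn_exp_neg_Ioi T).const_mul _)
          (h_conv.mono_set (Set.Ioi_subset_Ioi hT.le)) measurableSet_Ioi fun t ht => ?_
        rw [mul_comm]
        gcongr
        exact le_of_lt ht
    _ ≤ ∫ t in Set.Ioi 0, Real.exp (-t) * t ^ (x - 1) := by
        refine setIntegral_mono_set h_conv ?_ (Set.Ioi_subset_Ioi hT.le).eventuallyLE
        filter_upwards [ae_restrict_mem measurableSet_Ioi] with t ht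
        exact mul_nonneg (Real.exp_pos _).le (Real.rpow_nonneg (le_of_lt ht) _)

lemma summable_inv_Gamma_mul_pow {α : ℝ} (hα : 0 < α) (β : ℝ) {R : ℝ} (hR : 0 ≤ R) :
    Summable fun k : ℕ => (Real.Gamma (α * k + β))⁻¹ * R ^ k := by
  -- `T ^ α = 2 (R + 1)` makes the bound `Γ (α k + β) ≥ const * T ^ (α k)` beat `R ^ k`.
  obtain ⟨T, hT, hTα⟩ : ∃ T : ℝ, 0 < T ∧ T ^ α = 2 * (R + 1) :=
    ⟨(2 * (R + 1)) ^ α⁻¹, by positivity, Real.rpow_inv_rpow (by positivity) hα.ne'⟩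
  have h_large : ∀ᶠ k : ℕ in atTop, 1 ≤ α * k + β :=
    (tendsto_atTop_add_const_right _ β
      (tendsto_natCast_atTop_atTop.const_mul_atTop hα)).eventually_ge_atTop 1
  refine Summable.of_norm_bounded_eventually_nat
    (g := fun k : ℕ => (T ^ (β - 1) * Real.exp (-T))⁻¹ * (1 / 2 : ℝ) ^ k)
    (summable_geometric_two.mul_left _) ?_
  filter_upwards [h_large] with k hk
  have h_pow : T ^ (α * k + β - 1) = (2 * (R + 1)) ^ k * T ^ (β - 1) := by
    rw [add_sub_assoc, Real.rpow_add hT, Real.rpow_mul hT.le, hTα, Real.rpow_natCast]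
  have hΓ : (R + 1) ^ k * (2 ^ k * (T ^ (β - 1) * Real.exp (-T))) ≤ Real.Gamma (α * k + β) :=
    calc _ = T ^ (α * k + β - 1) * Real.exp (-T) := by rw [h_pow, mul_pow]; ring
      _ ≤ _ := rpow_mul_exp_neg_le_Gamma hT hk
  rw [Real.norm_of_nonneg (by have := Real.Gamma_pos_of_pos (zero_lt_one.trans_le hk); positivity)]
  calc (Real.Gamma (α * k + β))⁻¹ * R ^ k
      ≤ ((R + 1) ^ k * (2 ^ k * (T ^ (β - 1) * Real.exp (-T))))⁻¹ * (R + 1) ^ k := by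
        gcongr
        linarith
    _ = (T ^ (β - 1) * Real.exp (-T))⁻¹ * (1 / 2 : ℝ) ^ k := by
        rw [one_div, inv_pow]
        field_simp

end GammaGrowth

/-- The weighted mass of a kernel `K`: its supremum over `t ≥ 0` bounds convolution with
`τ ^ (α - 1) K(τ)` as an operator for the norm `sup t ^ (1 - α) ‖φ(t)‖`. -/
noncomputable def weightedKernelMass {V : Type*} [Norm V] (α : ℝ) (K : ℝ → V) (t : ℝ) : ℝ :=
  t ^ (1 - α) * ∫ τ in (0 : ℝ)..t, (t - τ) ^ (α - 1) * ‖K (t - τ)‖ * τ ^ (α - 1)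

section MittagLeffler

variable {𝔸 : Type*} [NormedRing 𝔸] [NormedAlgebra ℝ 𝔸]

/-- The Mittag-Leffler function `E_{α,β}` on a real Banach algebra; `ML` is its matrix case. -/
noncomputable def mittagLeffler (α β : ℝ) (B : 𝔸) : 𝔸 :=
  ∑' k : ℕ, (Real.Gamma (α * k + β))⁻¹ • B ^ k

variable {α β γ t : ℝ}

lemma radius_ofScalars_inv_Gamma_eq_top (hα : 0 < α) (β : ℝ) :
    (FormalMultilinearSeries.ofScalars 𝔸
      fun k : ℕ => (Real.Gamma (α * k + β))⁻¹).radius = ⊤ := by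
  refine FormalMultilinearSeries.radius_eq_top_of_summable_norm _ fun R => ?_
  refine Summable.of_norm_bounded_eventually_nat
    (summable_inv_Gamma_mul_pow hα β R.coe_nonneg).norm ?_
  filter_upwards [eventually_gt_atTop 0] with k hk
  rw [norm_mul, norm_mul, norm_norm]
  gcongr
  exact FormalMultilinearSeries.ofScalars_norm_le 𝔸 _ k hk

lemma rpow_mul_sub_rpow_smul_rpow_smul_pow {τ : ℝ} (hτ : τ < t) (k : ℕ) (A : 𝔸) :
    (τ ^ (γ - 1) * (t - τ) ^ (β - 1)) • (Real.Gamma (α * k + β))⁻¹ • ((t - τ) ^ α • A) ^ k =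
      (τ ^ (γ - 1) * (t - τ) ^ (α * k + β - 1)) • (Real.Gamma (α * k + β))⁻¹ • A ^ k := by
  have h_sub : 0 < t - τ := sub_pos.2 hτ
  rw [smul_pow, smul_comm _ (((t - τ) ^ α) ^ k), smul_smul, add_sub_assoc, Real.rpow_add h_sub,
    Real.rpow_mul h_sub.le, Real.rpow_natCast]
  ring_nf

lemma summable_norm_mittagLeffler_term (hα : 0 < α) (β : ℝ) (B : 𝔸) :
    Summable fun k : ℕ => ‖(Real.Gamma (α * k + β))⁻¹ • B ^ k‖ := by
  have h := (FormalMultilinearSeries.ofScalars 𝔸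
    fun k : ℕ => (Real.Gamma (α * k + β))⁻¹).summable_norm_apply (x := B)
    (by rw [radius_ofScalars_inv_Gamma_eq_top hα]; exact Metric.mem_eball.2 (edist_lt_top _ _))
  simpa only [FormalMultilinearSeries.ofScalars_apply_eq] using h

variable [CompleteSpace 𝔸]

lemma hasSum_mittagLeffler (hα : 0 < α) (β : ℝ) (B : 𝔸) :
    HasSum (fun k : ℕ => (Real.Gamma (α * k + β))⁻¹ • B ^ k) (mittagLeffler α β B) :=
  (summable_norm_mittagLeffler_term hα β B).of_norm.hasSum

lemma continuous_mittagLeffler (hα : 0 < α) (β : ℝ) :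
    Continuous (mittagLeffler α β : 𝔸 → 𝔸) := by
  have h := (FormalMultilinearSeries.ofScalars 𝔸
    fun k : ℕ => (Real.Gamma (α * k + β))⁻¹).continuousOn
  rw [radius_ofScalars_inv_Gamma_eq_top hα, Metric.eball_top, continuousOn_univ] at h
  convert h using 1
  exact (FormalMultilinearSeries.ofScalarsSum_eq_tsum _).symm

lemma mittagLeffler_eq_inv_Gamma_smul_one_add (hα : 0 < α) (β : ℝ) (B : 𝔸) :
    mittagLeffler α β B = (Real.Gamma β)⁻¹ • 1 + B * mittagLeffler α (α + β) B := by
  rw [mittagLeffler, (hasSum_mittagLeffler hα β B).summable.tsum_eq_zero_add, mittagLeffler,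
    ← (hasSum_mittagLeffler hα (α + β) B).summable.tsum_mul_left]
  congr 1
  · simp
  · refine tsum_congr fun k => ?_
    rw [mul_smul_comm, ← pow_succ']
    push_cast
    ring_nf

lemma continuous_mittagLeffler_rpow_smul (hα : 0 < α) (β : ℝ) (A : 𝔸) :
    Continuous fun t : ℝ => mittagLeffler α β (t ^ α • A) :=
  (continuous_mittagLeffler hα β).comp ((Real.continuous_rpow_const hα.le).smul continuous_const)

lemma map_mittagLeffler {𝔹 : Type*} [NormedRing 𝔹] [NormedAlgebra ℝ 𝔹] [CompleteSpace 𝔹]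
    (hα : 0 < α) (β : ℝ) (f : 𝔸 →ₐ[ℝ] 𝔹) (hf : Continuous f) (B : 𝔸) :
    f (mittagLeffler α β B) = mittagLeffler α β (f B) := by
  refine ((hasSum_mittagLeffler hα β B).map f hf).unique ?_
  simpa only [Function.comp_def, map_smul, map_pow] using hasSum_mittagLeffler hα β (f B)

lemma integral_rpow_mul_sub_rpow_smul_mittagLeffler_term (hα : 0 < α) (hβ : 0 < β) (hγ : 0 < γ)
    (ht : 0 < t) (k : ℕ) (A : 𝔸) :
    ∫ τ in (0 : ℝ)..t, (τ ^ (γ - 1) * (t - τ) ^ (β - 1)) •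
        (Real.Gamma (α * k + β))⁻¹ • ((t - τ) ^ α • A) ^ k =
      (t ^ (β + γ - 1) * Real.Gamma γ) •
        (Real.Gamma (α * k + (β + γ)))⁻¹ • (t ^ α • A) ^ k := by
  have h_congr : ∀ᵐ τ : ℝ, τ ∈ Set.uIoc 0 t →
      (τ ^ (γ - 1) * (t - τ) ^ (β - 1)) • (Real.Gamma (α * k + β))⁻¹ • ((t - τ) ^ α • A) ^ k =
        (τ ^ (γ - 1) * (t - τ) ^ (α * k + β - 1)) • (Real.Gamma (α * k + β))⁻¹ • A ^ k := by
    filter_upwards [Measure.ae_ne volume t] with τ hτ hτ_mem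
    rw [Set.uIoc_of_le ht.le] at hτ_mem
    exact rpow_mul_sub_rpow_smul_rpow_smul_pow (hτ_mem.2.lt_of_ne hτ) k A
  have h_pow : t ^ (γ + (α * k + β) - 1) = t ^ (β + γ - 1) * (t ^ α) ^ k := by
    rw [← Real.rpow_natCast, ← Real.rpow_mul ht.le, ← Real.rpow_add ht]
    ring_nf
  have hΓ : Real.Gamma (α * k + β) ≠ 0 := (Real.Gamma_pos_of_pos (by positivity)).ne'
  rw [intervalIntegral.integral_congr_ae h_congr, intervalIntegral.integral_smul_const,
    integral_rpow_mul_sub_rpow hγ (by positivity) ht, h_pow, smul_pow, smul_smul, smul_smul,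
    smul_smul, show γ + (α * k + β) = α * k + (β + γ) by ring]
  congr 1
  field_simp

lemma integral_rpow_mul_sub_rpow_smul_mittagLeffler (hα : 0 < α) (hβ : 0 < β) (hγ : 0 < γ)
    (ht : 0 < t) (A : 𝔸) :
    ∫ τ in (0 : ℝ)..t, (τ ^ (γ - 1) * (t - τ) ^ (β - 1)) • mittagLeffler α β ((t - τ) ^ α • A) =
      (t ^ (β + γ - 1) * Real.Gamma γ) • mittagLeffler α (β + γ) (t ^ α • A) := by
  have h_weight := intervalIntegrable_rpow_mul_sub_rpow hγ hβ ht.le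
  have h_sum := summable_norm_mittagLeffler_term hα β (t ^ α • A)
  refine HasSum.unique (intervalIntegral.hasSum_integral_of_dominated_convergence
    (F := fun (k : ℕ) τ => (τ ^ (γ - 1) * (t - τ) ^ (β - 1)) •
      (Real.Gamma (α * k + β))⁻¹ • ((t - τ) ^ α • A) ^ k)
    (fun k τ => (τ ^ (γ - 1) * (t - τ) ^ (β - 1)) *
      ‖(Real.Gamma (α * k + β))⁻¹ • (t ^ α • A) ^ k‖)
    (fun k => ?_) (fun k => .of_forall fun τ hτ => ?_)
    (.of_forall fun τ _ => h_sum.mul_left _) ?_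
    (.of_forall fun τ _ => (hasSum_mittagLeffler hα β _).const_smul _)) ?_
  · have h_cont : Continuous fun τ : ℝ => (Real.Gamma (α * k + β))⁻¹ • ((t - τ) ^ α • A) ^ k := by
      have := Real.continuous_rpow_const hα.le
      fun_prop
    exact h_weight.def'.aestronglyMeasurable.smul h_cont.aestronglyMeasurable
  · rw [Set.uIoc_of_le ht.le] at hτ
    have h_sub : 0 ≤ t - τ := sub_nonneg.2 hτ.2
    have h_le : (t - τ) ^ α ≤ t ^ α := by
      gcongr
      linarith [hτ.1]
    rw [norm_smul, Real.norm_of_nonneg (by have := hτ.1; positivity), smul_pow, smul_pow,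
      norm_smul, norm_smul, norm_smul, norm_smul, Real.norm_of_nonneg (by positivity),
      Real.norm_of_nonneg (by positivity : 0 ≤ (t ^ α) ^ k)]
    have := hτ.1
    gcongr
    rw [Real.norm_of_nonneg (by positivity)]
    gcongr
  · simp_rw [tsum_mul_left]
    exact h_weight.mul_const _
  · simp_rw [integral_rpow_mul_sub_rpow_smul_mittagLeffler_term hα hβ hγ ht]
    exact (hasSum_mittagLeffler hα (β + γ) _).const_smul _

lemma rpow_mul_norm_mittagLeffler_add_le (hα : 0 < α) {κ : ℝ} (ht : 0 ≤ t) (A : 𝔸)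
    (hκ : weightedKernelMass α (fun τ => mittagLeffler α α (τ ^ α • A)) t ≤ κ) :
    t ^ α * ‖mittagLeffler α (α + α) (t ^ α • A)‖ ≤ (Real.Gamma α)⁻¹ * κ := by
  have hΓ := Real.Gamma_pos_of_pos hα
  rw [le_inv_mul_iff₀ hΓ]
  obtain rfl | ht := ht.eq_or_lt
  · simpa [weightedKernelMass, Real.zero_rpow hα.ne'] using hκ
  calc Real.Gamma α * (t ^ α * ‖mittagLeffler α (α + α) (t ^ α • A)‖)
      = t ^ (1 - α) * ‖(t ^ (α + α - 1) * Real.Gamma α) •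
          mittagLeffler α (α + α) (t ^ α • A)‖ := by
        rw [norm_smul, Real.norm_of_nonneg (by positivity),
          show t ^ α = t ^ (1 - α) * t ^ (α + α - 1) by rw [← Real.rpow_add ht]; ring_nf]
        ring
    _ = t ^ (1 - α) * ‖∫ τ in (0 : ℝ)..t,
          (τ ^ (α - 1) * (t - τ) ^ (α - 1)) • mittagLeffler α α ((t - τ) ^ α • A)‖ := by
        rw [integral_rpow_mul_sub_rpow_smul_mittagLeffler hα hα hα ht]
    _ ≤ t ^ (1 - α) * ∫ τ in (0 : ℝ)..t,
          ‖(τ ^ (α - 1) * (t - τ) ^ (α - 1)) • mittagLeffler α α ((t - τ) ^ α • A)‖ := by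
        gcongr
        exact intervalIntegral.norm_integral_le_integral_norm ht.le
    _ = t ^ (1 - α) * ∫ τ in (0 : ℝ)..t,
          (t - τ) ^ (α - 1) * ‖mittagLeffler α α ((t - τ) ^ α • A)‖ * τ ^ (α - 1) := by
        congr 1
        refine intervalIntegral.integral_congr fun τ hτ => ?_
        rw [Set.uIcc_of_le ht.le] at hτ
        have h_sub : 0 ≤ t - τ := sub_nonneg.2 hτ.2
        have h_weight : 0 ≤ τ ^ (α - 1) * (t - τ) ^ (α - 1) :=
          mul_nonneg (Real.rpow_nonneg hτ.1 _) (Real.rpow_nonneg h_sub _)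
        simp only [norm_smul, Real.norm_of_nonneg h_weight]
        ring
    _ ≤ κ := hκ

lemma norm_mittagLeffler_rpow_smul_le (hα : 0 < α) {κ : ℝ} (ht : 0 ≤ t) (A : 𝔸)
    (hκ : weightedKernelMass α (fun τ => mittagLeffler α α (τ ^ α • A)) t ≤ κ) :
    ‖mittagLeffler α α (t ^ α • A)‖ ≤ (Real.Gamma α)⁻¹ * (‖(1 : 𝔸)‖ + ‖A‖ * κ) := by
  calc ‖mittagLeffler α α (t ^ α • A)‖
      = ‖(Real.Gamma α)⁻¹ • 1 + A * (t ^ α • mittagLeffler α (α + α) (t ^ α • A))‖ := by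
        rw [mittagLeffler_eq_inv_Gamma_smul_one_add hα, mul_smul_comm, smul_mul_assoc]
    _ ≤ (Real.Gamma α)⁻¹ * ‖(1 : 𝔸)‖ +
          ‖A‖ * (t ^ α * ‖mittagLeffler α (α + α) (t ^ α • A)‖) := by
        refine (norm_add_le _ _).trans (add_le_add ?_ ((norm_mul_le _ _).trans_eq ?_))
        · rw [norm_smul, Real.norm_of_nonneg (by positivity)]
        · rw [norm_smul, Real.norm_of_nonneg (by positivity)]
    _ ≤ (Real.Gamma α)⁻¹ * ‖(1 : 𝔸)‖ + ‖A‖ * ((Real.Gamma α)⁻¹ * κ) := by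
        exact add_le_add le_rfl (mul_le_mul_of_nonneg_left
          (rpow_mul_norm_mittagLeffler_add_le hα ht A hκ) (norm_nonneg A))
    _ = (Real.Gamma α)⁻¹ * (‖(1 : 𝔸)‖ + ‖A‖ * κ) := by ring

end MittagLeffler

section FracConv

variable {E F : Type*} [NormedAddCommGroup E] [NormedSpace ℝ E] [NormedAddCommGroup F]
  [NormedSpace ℝ F] {α β κ M t : ℝ} {K : ℝ → E →L[ℝ] F} {f : ℝ → E}

lemma continuousOn_integral_smul {X : Type*} [TopologicalSpace X] [FirstCountableTopology X]
    [WeaklyLocallyCompactSpace X] {S : Set X} (hS : IsClosed S) {a b : ℝ} {w : ℝ → ℝ}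
    (hw : IntervalIntegrable w volume a b) {h : X → ℝ → E}
    (hh : ContinuousOn (Function.uncurry h) (S ×ˢ Set.uIcc a b)) :
    ContinuousOn (fun x => ∫ r in a..b, w r • h x r) S := by
  intro x hx
  obtain ⟨U, hU, hxU⟩ := exists_compact_mem_nhds x
  obtain ⟨C, hC⟩ := ((hU.inter_right hS).prod isCompact_uIcc).exists_bound_of_continuousOn
    (hh.mono (Set.prod_mono_left Set.inter_subset_right))
  refine intervalIntegral.continuousWithinAt_of_dominated_interval
    (bound := fun r => ‖w r‖ * C) ?_ ?_ (hw.norm.mul_const C) (.of_forall fun r hr => ?_)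
  · filter_upwards [self_mem_nhdsWithin] with y hy
    exact hw.def'.aestronglyMeasurable.smul
      (((hh.uncurry_left y hy).mono Set.uIoc_subset_uIcc).aestronglyMeasurable
        measurableSet_uIoc)
  · filter_upwards [self_mem_nhdsWithin, mem_nhdsWithin_of_mem_nhds hxU] with y hy hyU
    refine .of_forall fun r hr => ?_
    rw [norm_smul]
    gcongr
    exact hC (y, r) ⟨⟨hyU, hy⟩, Set.uIoc_subset_uIcc hr⟩
  · exact ((hh.uncurry_right r (Set.uIoc_subset_uIcc hr)) x hx).const_smul (w r)

/-- Convolution on `[0, t]` with the weakly singular kernel `τ ^ (α - 1) K(τ)`; for `K = Γ(α)⁻¹` it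
is the Riemann–Liouville fractional integral of order `α`. -/
noncomputable def fracConv (α : ℝ) (K : ℝ → E →L[ℝ] F) (f : ℝ → E) (t : ℝ) : F :=
  ∫ τ in (0 : ℝ)..t, (t - τ) ^ (α - 1) • K (t - τ) (f τ)

lemma rpow_smul_fracConv_rpow_smul (hβ : 0 < β) (ht : 0 ≤ t) :
    t ^ (1 - α) • fracConv α K (fun τ => τ ^ (β - 1) • f τ) t =
      t ^ β • ∫ r in (0 : ℝ)..1, (r ^ (β - 1) * (1 - r) ^ (α - 1)) • K (t - t * r) (f (t * r)) := by
  obtain rfl | ht := ht.eq_or_lt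
  · simp [fracConv, Real.zero_rpow hβ.ne']
  · have h_pow : t ^ (1 - α) * t ^ (β + α - 1) = t ^ β := by
      rw [← Real.rpow_add ht]
      ring_nf
    simp_rw [fracConv, map_smul, smul_smul, mul_comm ((t - _) ^ (α - 1))]
    rw [integral_rpow_mul_sub_rpow_smul ht (fun τ => K (t - τ) (f τ)), smul_smul, h_pow]

lemma continuousOn_rpow_smul_fracConv_rpow_smul (hα : 0 < α) (hβ : 0 < β)
    (hK : ContinuousOn K (Set.Ici 0)) (hf : ContinuousOn f (Set.Ici 0)) :
    ContinuousOn (fun t => t ^ (1 - α) • fracConv α K (fun τ => τ ^ (β - 1) • f τ) t)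
      (Set.Ici 0) := by
  have h_cont : ContinuousOn (Function.uncurry fun t r : ℝ => K (t - t * r) (f (t * r)))
      (Set.Ici 0 ×ˢ Set.uIcc 0 1) := by
    rw [Set.uIcc_of_le zero_le_one]
    refine (hK.comp (by fun_prop) fun p hp => ?_).clm_apply (hf.comp (by fun_prop) fun p hp => ?_)
    · exact sub_nonneg.2 (mul_le_of_le_one_right hp.1 hp.2.2)
    · exact mul_nonneg hp.1 hp.2.1
  refine ((Real.continuous_rpow_const hβ.le).continuousOn.smul (continuousOn_integral_smul
    isClosed_Ici (intervalIntegrable_rpow_mul_one_sub_rpow hβ hα) h_cont)).congr fun t ht => ?_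
  exact rpow_smul_fracConv_rpow_smul hβ ht

lemma continuousOn_rpow_smul_fracConv (hα : 0 < α)
    (hK : ContinuousOn K (Set.Ici 0)) (hf : ContinuousOn f (Set.Ici 0)) :
    ContinuousOn (fun t => t ^ (1 - α) • fracConv α K f t) (Set.Ici 0) := by
  simpa only [sub_self, Real.rpow_zero, one_smul] using
    continuousOn_rpow_smul_fracConv_rpow_smul hα one_pos hK hf

lemma continuousOn_kernel_sub (hK : ContinuousOn K (Set.Ici 0)) :
    ContinuousOn (fun τ => K (t - τ)) (Set.Iic t) :=
  hK.comp (by fun_prop) fun _ hτ => Set.mem_Ici.2 (sub_nonneg.2 hτ)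

lemma intervalIntegrable_weightedKernel (hα : 0 < α) (hK : ContinuousOn K (Set.Ici 0))
    (ht : 0 ≤ t) :
    IntervalIntegrable (fun τ => (t - τ) ^ (α - 1) * ‖K (t - τ)‖ * τ ^ (α - 1)) volume 0 t := by
  have h := (intervalIntegrable_rpow_mul_sub_rpow hα hα ht).mul_continuousOn
    ((continuousOn_kernel_sub hK).norm.mono (Set.uIcc_of_le ht ▸ Set.Icc_subset_Iic_self))
  refine h.congr fun τ _ => ?_
  ring

lemma norm_rpow_smul_kernel_apply_le {τ : ℝ} (hτ : τ ∈ Set.Ioc 0 t)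
    (hM : ∀ τ ∈ Set.Ioc 0 t, ‖f τ‖ ≤ M * τ ^ (α - 1)) :
    ‖(t - τ) ^ (α - 1) • K (t - τ) (f τ)‖ ≤
      (t - τ) ^ (α - 1) * ‖K (t - τ)‖ * τ ^ (α - 1) * M := by
  have h_weight : 0 ≤ (t - τ) ^ (α - 1) := Real.rpow_nonneg (sub_nonneg.2 hτ.2) _
  calc ‖(t - τ) ^ (α - 1) • K (t - τ) (f τ)‖
      ≤ (t - τ) ^ (α - 1) * (‖K (t - τ)‖ * (M * τ ^ (α - 1))) := by
        rw [norm_smul, Real.norm_of_nonneg h_weight]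
        gcongr
        exact (K (t - τ)).le_opNorm_of_le (hM τ hτ)
    _ = (t - τ) ^ (α - 1) * ‖K (t - τ)‖ * τ ^ (α - 1) * M := by ring

lemma intervalIntegrable_fracConv (hα : 0 < α) (hK : ContinuousOn K (Set.Ici 0)) (ht : 0 ≤ t)
    (hf : ContinuousOn f (Set.Ioi 0)) (hM : ∀ τ ∈ Set.Ioc 0 t, ‖f τ‖ ≤ M * τ ^ (α - 1)) :
    IntervalIntegrable (fun τ => (t - τ) ^ (α - 1) • K (t - τ) (f τ)) volume 0 t := by
  have h_rpow : Measurable fun τ : ℝ => (t - τ) ^ (α - 1) := by fun_prop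
  have h_cont : ContinuousOn (fun τ => K (t - τ) (f τ)) (Set.Ioc 0 t) :=
    ((continuousOn_kernel_sub hK).mono Set.Ioc_subset_Iic_self).clm_apply
      (hf.mono Set.Ioc_subset_Ioi_self)
  refine ((intervalIntegrable_weightedKernel hα hK ht).mul_const M).mono_fun' ?_ ?_
  · rw [Set.uIoc_of_le ht]
    exact h_rpow.aestronglyMeasurable.smul (h_cont.aestronglyMeasurable measurableSet_Ioc)
  · rw [Set.uIoc_of_le ht]
    exact (ae_restrict_iff' measurableSet_Ioc).2
      (.of_forall fun τ hτ => norm_rpow_smul_kernel_apply_le hτ hM)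

lemma rpow_mul_norm_fracConv_le (hα : 0 < α) (hK : ContinuousOn K (Set.Ici 0)) (ht : 0 ≤ t)
    (hκ : weightedKernelMass α K t ≤ κ) (hM₀ : 0 ≤ M)
    (hM : ∀ τ ∈ Set.Ioc 0 t, ‖f τ‖ ≤ M * τ ^ (α - 1)) :
    t ^ (1 - α) * ‖fracConv α K f t‖ ≤ κ * M :=
  calc t ^ (1 - α) * ‖fracConv α K f t‖
      ≤ t ^ (1 - α) *
          ∫ τ in (0 : ℝ)..t, (t - τ) ^ (α - 1) * ‖K (t - τ)‖ * τ ^ (α - 1) * M := by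
        gcongr
        exact intervalIntegral.norm_integral_le_of_norm_le ht
          (.of_forall fun τ hτ => norm_rpow_smul_kernel_apply_le hτ hM)
          ((intervalIntegrable_weightedKernel hα hK ht).mul_const M)
    _ = weightedKernelMass α K t * M := by
        rw [intervalIntegral.integral_mul_const, ← mul_assoc, weightedKernelMass]
    _ ≤ κ * M := by gcongr

lemma rpow_mul_norm_fracConv_le_integral (ht : 0 ≤ t) :
    t ^ (1 - α) * ‖fracConv α K f t‖ ≤
      t ^ (1 - α) * ∫ τ in (0 : ℝ)..t, (t - τ) ^ (α - 1) * ‖K (t - τ) (f τ)‖ := by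
  gcongr
  refine (intervalIntegral.norm_integral_le_integral_norm ht).trans_eq
    (intervalIntegral.integral_congr fun τ hτ => ?_)
  rw [Set.uIcc_of_le ht] at hτ
  simp only [norm_smul, Real.norm_of_nonneg (Real.rpow_nonneg (sub_nonneg.2 hτ.2) _)]

lemma fracConv_sub (hα : 0 < α) (hK : ContinuousOn K (Set.Ici 0)) (ht : 0 ≤ t) {g : ℝ → E} {N : ℝ}
    (hf : ContinuousOn f (Set.Ioi 0)) (hM : ∀ τ ∈ Set.Ioc 0 t, ‖f τ‖ ≤ M * τ ^ (α - 1))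
    (hg : ContinuousOn g (Set.Ioi 0)) (hN : ∀ τ ∈ Set.Ioc 0 t, ‖g τ‖ ≤ N * τ ^ (α - 1)) :
    fracConv α K (fun τ => f τ - g τ) t = fracConv α K f t - fracConv α K g t := by
  simp only [fracConv, map_sub, smul_sub]
  exact intervalIntegral.integral_sub (intervalIntegrable_fracConv hα hK ht hf hM)
    (intervalIntegrable_fracConv hα hK ht hg hN)

end FracConv

section WeightedSpace

variable {E : Type*} [NormedAddCommGroup E] [NormedSpace ℝ E] {α M : ℝ} {x y : ℝ → E}

/-- The weighted space `C⁰_{1-α}([0,∞), E)`; `memC0inf` is the case `E = ℝ^s`. -/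
def MemWeightedC0 (α : ℝ) (x : ℝ → E) : Prop :=
  ContinuousOn x (Set.Ioi 0) ∧
  (∃ l : E, Tendsto (fun t : ℝ => t ^ (1 - α) • x t) (𝓝[>] 0) (𝓝 l)) ∧
  (∃ C : ℝ, ∀ t : ℝ, 0 ≤ t → t ^ (1 - α) * ‖x t‖ ≤ C)

lemma rpow_one_sub_mul_rpow_sub_one {t : ℝ} (ht : 0 < t) : t ^ (1 - α) * t ^ (α - 1) = 1 := by
  rw [← Real.rpow_add ht, sub_add_sub_cancel, sub_self, Real.rpow_zero]

lemma rpow_one_sub_mul_le_iff {t a : ℝ} (ht : 0 < t) :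
    t ^ (1 - α) * a ≤ M ↔ a ≤ M * t ^ (α - 1) := by
  rw [← neg_sub 1 α, Real.rpow_neg ht.le, ← div_eq_mul_inv, le_div_iff₀' (by positivity)]

lemma continuousOn_rpow_const_Ioi (b : ℝ) : ContinuousOn (fun t : ℝ => t ^ b) (Set.Ioi 0) :=
  fun t ht => (Real.continuousAt_rpow_const t b (.inl (ne_of_gt ht))).continuousWithinAt

lemma norm_rpow_smul_le {t : ℝ} (ht : 0 < t) (hM : ‖y t‖ ≤ M) :
    ‖t ^ (α - 1) • y t‖ ≤ M * t ^ (α - 1) := by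
  rw [norm_smul, Real.norm_of_nonneg (by positivity), mul_comm]
  gcongr

lemma memWeightedC0_rpow_smul (hα : α < 1) (hy : ContinuousOn y (Set.Ici 0))
    (hM : ∀ t, 0 ≤ t → ‖y t‖ ≤ M) : MemWeightedC0 α fun t => t ^ (α - 1) • y t := by
  refine ⟨(continuousOn_rpow_const_Ioi _).smul (hy.mono Set.Ioi_subset_Ici_self), ⟨y 0, ?_⟩,
    M, fun t ht => ?_⟩
  · refine ((hy 0 Set.self_mem_Ici).mono Set.Ioi_subset_Ici_self).congr' ?_
    filter_upwards [self_mem_nhdsWithin] with t ht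
    rw [smul_smul, rpow_one_sub_mul_rpow_sub_one ht, one_smul]
  · obtain rfl | ht := ht.eq_or_lt
    · rw [Real.zero_rpow (sub_pos.2 hα).ne', zero_mul]
      exact (norm_nonneg _).trans (hM 0 le_rfl)
    · exact (rpow_one_sub_mul_le_iff ht).2 (norm_rpow_smul_le ht (hM t ht.le))

lemma MemWeightedC0.exists_norm_le (hx : MemWeightedC0 α x) :
    ∃ M, 0 ≤ M ∧ ∀ t, 0 < t → ‖x t‖ ≤ M * t ^ (α - 1) := by
  obtain ⟨-, -, C, hC⟩ := hx
  exact ⟨C, (by positivity : (0 : ℝ) ≤ _).trans (hC 0 le_rfl),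
    fun t ht => (rpow_one_sub_mul_le_iff ht).1 (hC t ht.le)⟩

lemma MemWeightedC0.tendsto_zero (hα : α < 1) (hx : MemWeightedC0 α x) :
    Tendsto x atTop (𝓝 0) := by
  obtain ⟨M, -, hM⟩ := hx.exists_norm_le
  have h_lim : Tendsto (fun t : ℝ => M * t ^ (α - 1)) atTop (𝓝 0) := by
    simpa only [neg_sub, mul_zero] using
      (tendsto_rpow_neg_atTop (sub_pos.2 hα)).const_mul M
  refine squeeze_zero_norm' ?_ h_lim
  filter_upwards [eventually_gt_atTop 0] with t ht
  exact hM t ht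

end WeightedSpace

section Volterra

variable {E : Type*} [NormedAddCommGroup E] [NormedSpace ℝ E] {α c κ t M N D : ℝ}
  {K Q : ℝ → E →L[ℝ] E} {F g φ ψ y z : ℝ → E} {x₀ : E}

/-- The variation-of-constants equation with resolvent `t ^ (α - 1) K(t)`; for
`K(t) = E_{α,α}(t ^ α A)` it is the integral form of `D^α_{0+} φ = A φ + Q φ + g`. -/
def IsMildSolution (α : ℝ) (K Q : ℝ → E →L[ℝ] E) (g : ℝ → E) (x₀ : E) (φ : ℝ → E) : Prop :=
  ∀ t, 0 < t → φ t =
    t ^ (α - 1) • K t x₀ + fracConv α K (fun τ => Q τ (φ τ)) t + fracConv α K g t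

/-- The integral operator of `IsMildSolution` in the weighted unknown `y(t) = t ^ (1 - α) φ(t)`,
with free term `F`. -/
noncomputable def volterraMap (α : ℝ) (K Q : ℝ → E →L[ℝ] E) (F y : ℝ → E) (t : ℝ) : E :=
  F t + t ^ (1 - α) • fracConv α K (fun τ => Q τ (τ ^ (α - 1) • y τ)) t

lemma isMildSolution_rpow_smul (hy : ∀ t, 0 < t → y t =
      volterraMap α K Q (fun t => K t x₀ + t ^ (1 - α) • fracConv α K g t) y t) :
    IsMildSolution α K Q g x₀ fun t => t ^ (α - 1) • y t := by
  intro t ht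
  have h_one : t ^ (α - 1) * t ^ (1 - α) = 1 := by
    rw [mul_comm, rpow_one_sub_mul_rpow_sub_one ht]
  simp only
  rw [hy t ht, volterraMap, smul_add, smul_add, smul_smul, smul_smul, h_one, one_smul, one_smul]
  abel

lemma norm_apply_le_of_norm_le (hc : ∀ t, 0 ≤ t → ‖Q t‖ ≤ c) {r : ℝ} (ht : 0 < t)
    (hM : ‖φ t‖ ≤ M * r) : ‖Q t (φ t)‖ ≤ c * M * r := by
  rw [mul_assoc]
  exact (Q t).le_of_opNorm_le_of_le (hc t ht.le) hM

lemma rpow_mul_norm_fracConv_sub_fracConv_le (hα : 0 < α) (hK : ContinuousOn K (Set.Ici 0))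
    (hQ : ContinuousOn Q (Set.Ici 0)) (hc : ∀ t, 0 ≤ t → ‖Q t‖ ≤ c) (ht : 0 ≤ t)
    (hκ : weightedKernelMass α K t ≤ κ)
    (hφ : ContinuousOn φ (Set.Ioi 0)) (hM : ∀ τ, 0 < τ → ‖φ τ‖ ≤ M * τ ^ (α - 1))
    (hψ : ContinuousOn ψ (Set.Ioi 0)) (hN : ∀ τ, 0 < τ → ‖ψ τ‖ ≤ N * τ ^ (α - 1))
    (hD₀ : 0 ≤ D) (hD : ∀ τ, 0 < τ → ‖φ τ - ψ τ‖ ≤ D * τ ^ (α - 1)) :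
    t ^ (1 - α) * ‖fracConv α K (fun τ => Q τ (φ τ)) t - fracConv α K (fun τ => Q τ (ψ τ)) t‖ ≤
      c * κ * D := by
  have hc₀ : 0 ≤ c := (norm_nonneg _).trans (hc 0 le_rfl)
  have hQ' := hQ.mono Set.Ioi_subset_Ici_self
  rw [← fracConv_sub hα hK ht (hQ'.clm_apply hφ)
    (fun τ hτ => norm_apply_le_of_norm_le hc hτ.1 (hM τ hτ.1)) (hQ'.clm_apply hψ)
    (fun τ hτ => norm_apply_le_of_norm_le hc hτ.1 (hN τ hτ.1)), mul_comm c κ, mul_assoc]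
  refine rpow_mul_norm_fracConv_le hα hK ht hκ (mul_nonneg hc₀ hD₀) fun τ hτ => ?_
  rw [← map_sub]
  exact norm_apply_le_of_norm_le (φ := fun τ => φ τ - ψ τ) hc hτ.1 (hD τ hτ.1)

lemma continuousOn_volterraMap (hα : 0 < α) (hK : ContinuousOn K (Set.Ici 0))
    (hQ : ContinuousOn Q (Set.Ici 0)) (hF : ContinuousOn F (Set.Ici 0))
    (hy : ContinuousOn y (Set.Ici 0)) : ContinuousOn (volterraMap α K Q F y) (Set.Ici 0) := by
  have h := continuousOn_rpow_smul_fracConv_rpow_smul hα hα hK (hQ.clm_apply hy)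
  simp_rw [← map_smul] at h
  exact hF.add h

lemma norm_volterraMap_sub_le (hα : 0 < α) (hK : ContinuousOn K (Set.Ici 0))
    (hQ : ContinuousOn Q (Set.Ici 0)) (hc : ∀ t, 0 ≤ t → ‖Q t‖ ≤ c) (ht : 0 ≤ t)
    (hκ : weightedKernelMass α K t ≤ κ)
    (hy : ContinuousOn y (Set.Ioi 0)) (hM : ∀ τ, 0 < τ → ‖y τ‖ ≤ M)
    (hz : ContinuousOn z (Set.Ioi 0)) (hN : ∀ τ, 0 < τ → ‖z τ‖ ≤ N)
    (hD₀ : 0 ≤ D) (hD : ∀ τ, 0 < τ → ‖y τ - z τ‖ ≤ D) :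
    ‖volterraMap α K Q F y t - volterraMap α K Q F z t‖ ≤ c * κ * D := by
  rw [volterraMap, volterraMap, add_sub_add_left_eq_sub, ← smul_sub, norm_smul,
    Real.norm_of_nonneg (by positivity)]
  refine rpow_mul_norm_fracConv_sub_fracConv_le hα hK hQ hc ht hκ
    ((continuousOn_rpow_const_Ioi _).smul hy) (fun τ hτ => norm_rpow_smul_le hτ (hM τ hτ))
    ((continuousOn_rpow_const_Ioi _).smul hz) (fun τ hτ => norm_rpow_smul_le hτ (hN τ hτ))
    hD₀ fun τ hτ => ?_
  rw [← smul_sub]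
  exact norm_rpow_smul_le (y := fun τ => y τ - z τ) hτ (hD τ hτ)

lemma norm_volterraMap_le (hα : 0 < α) (hK : ContinuousOn K (Set.Ici 0))
    (hc : ∀ t, 0 ≤ t → ‖Q t‖ ≤ c) (ht : 0 ≤ t) (hκ : weightedKernelMass α K t ≤ κ)
    (hF : ‖F t‖ ≤ N) (hM₀ : 0 ≤ M) (hM : ∀ τ, 0 < τ → ‖y τ‖ ≤ M) :
    ‖volterraMap α K Q F y t‖ ≤ N + κ * (c * M) := by
  have hc₀ : 0 ≤ c := (norm_nonneg _).trans (hc 0 le_rfl)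
  refine (norm_add_le _ _).trans (add_le_add hF ?_)
  rw [norm_smul, Real.norm_of_nonneg (by positivity)]
  exact rpow_mul_norm_fracConv_le hα hK ht hκ (mul_nonneg hc₀ hM₀) fun τ hτ =>
    norm_apply_le_of_norm_le (φ := fun τ => τ ^ (α - 1) • y τ) hc hτ.1
      (norm_rpow_smul_le hτ.1 (hM τ hτ.1))

open scoped BoundedContinuousFunction

lemma exists_eq_volterraMap [CompleteSpace E] (hα : 0 < α) (hK : ContinuousOn K (Set.Ici 0))
    (hQ : ContinuousOn Q (Set.Ici 0)) (hc : ∀ t, 0 ≤ t → ‖Q t‖ ≤ c)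
    (hκ : ∀ t, 0 ≤ t → weightedKernelMass α K t ≤ κ) (hcκ : c * κ < 1)
    (hF : ContinuousOn F (Set.Ici 0)) (hN : ∀ t, 0 ≤ t → ‖F t‖ ≤ N) :
    ∃ y : ℝ →ᵇ E, ∀ t, 0 ≤ t → y t = volterraMap α K Q F y t := by
  have hc₀ : 0 ≤ c := (norm_nonneg _).trans (hc 0 le_rfl)
  have hκ₀ : 0 ≤ κ := by simpa [weightedKernelMass] using hκ 0 le_rfl
  have h_map (y : ℝ →ᵇ E) : ∃ z : ℝ →ᵇ E, ∀ t, z t = volterraMap α K Q F y (max t 0) :=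
    ⟨.ofNormedAddCommGroup _
      ((continuousOn_volterraMap hα hK hQ hF y.continuous.continuousOn).comp_continuous
        (by fun_prop) fun _ => Set.mem_Ici.2 (le_max_right _ _)) (N + κ * (c * ‖y‖))
      fun t => norm_volterraMap_le hα hK hc (le_max_right _ _) (hκ _ (le_max_right _ _))
        (hN _ (le_max_right _ _)) (norm_nonneg y) fun τ _ => y.norm_coe_le_norm τ,
      fun _ => rfl⟩
  choose Φ hΦ using h_map
  have h_contr : ContractingWith (c * κ).toNNReal Φ := by
    refine ⟨Real.toNNReal_lt_one.2 hcκ, .of_dist_le_mul fun y z => ?_⟩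
    rw [Real.coe_toNNReal _ (mul_nonneg hc₀ hκ₀)]
    refine (BoundedContinuousFunction.dist_le (by positivity)).2 fun t => ?_
    rw [dist_eq_norm, hΦ, hΦ]
    refine norm_volterraMap_sub_le hα hK hQ hc (le_max_right _ _) (hκ _ (le_max_right _ _))
      y.continuous.continuousOn (fun τ _ => y.norm_coe_le_norm τ)
      z.continuous.continuousOn (fun τ _ => z.norm_coe_le_norm τ) dist_nonneg fun τ _ => ?_
    rw [← dist_eq_norm]
    exact BoundedContinuousFunction.dist_coe_le_dist τ
  obtain ⟨y, hy⟩ : ∃ y, Φ y = y := ⟨_, h_contr.fixedPoint_isFixedPt⟩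
  refine ⟨y, fun t ht => ?_⟩
  calc y t = Φ y t := by rw [hy]
    _ = volterraMap α K Q F y t := by rw [hΦ, max_eq_left ht]

lemma IsMildSolution.norm_sub_le (hα : 0 < α) (hK : ContinuousOn K (Set.Ici 0))
    (hQ : ContinuousOn Q (Set.Ici 0)) (hc : ∀ t, 0 ≤ t → ‖Q t‖ ≤ c)
    (hκ : ∀ t, 0 ≤ t → weightedKernelMass α K t ≤ κ)
    (hφ_mem : MemWeightedC0 α φ) (hφ : IsMildSolution α K Q g x₀ φ)
    (hψ_mem : MemWeightedC0 α ψ) (hψ : IsMildSolution α K Q g x₀ ψ)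
    (hD₀ : 0 ≤ D) (hD : ∀ t, 0 < t → ‖φ t - ψ t‖ ≤ D * t ^ (α - 1)) (ht : 0 < t) :
    ‖φ t - ψ t‖ ≤ c * κ * D * t ^ (α - 1) := by
  obtain ⟨M, -, hM⟩ := hφ_mem.exists_norm_le
  obtain ⟨N, -, hN⟩ := hψ_mem.exists_norm_le
  rw [← rpow_one_sub_mul_le_iff ht, hφ t ht, hψ t ht, add_sub_add_right_eq_sub,
    add_sub_add_left_eq_sub]
  exact rpow_mul_norm_fracConv_sub_fracConv_le hα hK hQ hc ht.le (hκ t ht.le)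
    hφ_mem.1 hM hψ_mem.1 hN hD₀ hD

lemma IsMildSolution.eq (hα : 0 < α) (hK : ContinuousOn K (Set.Ici 0))
    (hQ : ContinuousOn Q (Set.Ici 0)) (hc : ∀ t, 0 ≤ t → ‖Q t‖ ≤ c)
    (hκ : ∀ t, 0 ≤ t → weightedKernelMass α K t ≤ κ) (hcκ : c * κ < 1)
    (hφ_mem : MemWeightedC0 α φ) (hφ : IsMildSolution α K Q g x₀ φ)
    (hψ_mem : MemWeightedC0 α ψ) (hψ : IsMildSolution α K Q g x₀ ψ) (ht : 0 < t) :
    φ t = ψ t := by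
  have hc₀ : 0 ≤ c := (norm_nonneg _).trans (hc 0 le_rfl)
  have hκ₀ : 0 ≤ κ := by simpa [weightedKernelMass] using hκ 0 le_rfl
  obtain ⟨M, hM₀, hM⟩ := hφ_mem.exists_norm_le
  obtain ⟨N, hN₀, hN⟩ := hψ_mem.exists_norm_le
  have h_iterate (n : ℕ) :
      ∀ t, 0 < t → ‖φ t - ψ t‖ ≤ (c * κ) ^ n * (M + N) * t ^ (α - 1) := by
    induction n with
    | zero =>
      intro t ht
      rw [pow_zero, one_mul, add_mul]
      exact (_root_.norm_sub_le _ _).trans (add_le_add (hM t ht) (hN t ht))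
    | succ n ih =>
      intro t ht
      rw [pow_succ', mul_assoc (c * κ)]
      exact norm_sub_le hα hK hQ hc hκ hφ_mem hφ hψ_mem hψ (by positivity) ih ht
  have h_lim : Tendsto (fun n : ℕ => (c * κ) ^ n * (M + N) * t ^ (α - 1)) atTop (𝓝 0) := by
    simpa only [zero_mul] using ((tendsto_pow_atTop_nhds_zero_of_lt_one
      (mul_nonneg hc₀ hκ₀) hcκ).mul_const (M + N)).mul_const (t ^ (α - 1))
  exact sub_eq_zero.1 (norm_le_zero_iff.1 (ge_of_tendsto' h_lim fun n => h_iterate n t ht))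

theorem exists_isMildSolution [CompleteSpace E] (hα₀ : 0 < α) (hα₁ : α < 1)
    (hK : ContinuousOn K (Set.Ici 0)) (hK_bdd : ∀ t, 0 ≤ t → ‖K t‖ ≤ M)
    (hQ : ContinuousOn Q (Set.Ici 0)) (hc : ∀ t, 0 ≤ t → ‖Q t‖ ≤ c)
    (hκ : ∀ t, 0 ≤ t → weightedKernelMass α K t ≤ κ) (hcκ : c * κ < 1)
    (hg : ContinuousOn g (Set.Ici 0))
    (hg_bdd : ∀ t, 0 ≤ t → t ^ (1 - α) * ‖fracConv α K g t‖ ≤ N) (x₀ : E) :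
    ∃ φ, MemWeightedC0 α φ ∧ IsMildSolution α K Q g x₀ φ := by
  obtain ⟨y, hy⟩ := exists_eq_volterraMap hα₀ hK hQ hc hκ hcκ (N := M * ‖x₀‖ + N)
    ((hK.clm_apply continuousOn_const).add (continuousOn_rpow_smul_fracConv hα₀ hK hg))
    fun t ht => (norm_add_le _ _).trans (add_le_add
      ((K t).le_of_opNorm_le (hK_bdd t ht) x₀)
      (by
        rw [norm_smul, Real.norm_of_nonneg (by positivity)]
        exact hg_bdd t ht))
  exact ⟨fun t => t ^ (α - 1) • y t,
    memWeightedC0_rpow_smul hα₁ y.continuous.continuousOn fun t _ => y.norm_coe_le_norm t,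
    isMildSolution_rpow_smul fun t ht => hy t ht.le⟩

end Volterra

theorem stmt12_general {E : Type*} [NormedAddCommGroup E] [NormedSpace ℝ E] [CompleteSpace E]
    {α c κ C : ℝ} (hα₀ : 0 < α) (hα₁ : α < 1) (A : E →L[ℝ] E) {Q : ℝ → E →L[ℝ] E}
    (hQ : ContinuousOn Q (Set.Ici 0)) (hc : ∀ t, 0 ≤ t → ‖Q t‖ ≤ c)
    (hκ : ∀ t, 0 ≤ t → weightedKernelMass α (fun τ => mittagLeffler α α (τ ^ α • A)) t ≤ κ)
    (hcκ : c * κ < 1) {g : ℝ → E} (hg : ContinuousOn g (Set.Ici 0))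
    (hC : ∀ t, 0 ≤ t → t ^ (1 - α) * ∫ τ in (0 : ℝ)..t,
      (t - τ) ^ (α - 1) * ‖mittagLeffler α α ((t - τ) ^ α • A) (g τ)‖ ≤ C) (x₀ : E) :
    ∃ φ : ℝ → E, MemWeightedC0 α φ ∧
      IsMildSolution α (fun t => mittagLeffler α α (t ^ α • A)) Q g x₀ φ ∧
      (∀ ψ : ℝ → E, MemWeightedC0 α ψ →
        IsMildSolution α (fun t => mittagLeffler α α (t ^ α • A)) Q g x₀ ψ →
        ∀ t, 0 < t → ψ t = φ t) ∧
      Tendsto φ atTop (𝓝 0) := by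
  have hK := (continuous_mittagLeffler_rpow_smul hα₀ α A).continuousOn (s := Set.Ici 0)
  obtain ⟨φ, hφ_mem, hφ⟩ := exists_isMildSolution hα₀ hα₁ hK
    (fun t ht => norm_mittagLeffler_rpow_smul_le hα₀ ht A (hκ t ht)) hQ hc hκ hcκ hg
    (fun t ht => (rpow_mul_norm_fracConv_le_integral ht).trans (hC t ht)) x₀
  exact ⟨φ, hφ_mem, hφ,
    fun ψ hψ_mem hψ t ht => hψ.eq hα₀ hK hQ hc hκ hcκ hψ_mem hφ_mem hφ ht,
    hφ_mem.tendsto_zero hα₁⟩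

section Matrix

attribute [local instance] Matrix.linftyOpNormedAlgebra

variable {s : ℕ}

/-- The action of a square matrix on `ℝ^s` with the supremum norm. For the row-sum norm on matrices
it is isometric, see `norm_matrixOp`. -/
noncomputable def matrixOp (s : ℕ) :
    Matrix (Fin s) (Fin s) ℝ →ₐ[ℝ] ((Fin s → ℝ) →L[ℝ] (Fin s → ℝ)) :=
  (Module.End.toContinuousLinearMap (Fin s → ℝ)).toAlgHom.comp Matrix.toLinAlgEquiv'.toAlgHom

lemma matrixOp_apply (B : Matrix (Fin s) (Fin s) ℝ) (v : Fin s → ℝ) :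
    matrixOp s B v = B.mulVec v := rfl

lemma norm_matrixOp (B : Matrix (Fin s) (Fin s) ℝ) : ‖matrixOp s B‖ = ‖B‖ :=
  (Matrix.linfty_opNorm_eq_opNorm B).symm

lemma continuous_matrixOp : Continuous (matrixOp s) :=
  (matrixOp s).toLinearMap.continuous_of_finiteDimensional

lemma matrixOp_ML {α : ℝ} (hα : 0 < α) (β : ℝ) (B : Matrix (Fin s) (Fin s) ℝ) :
    matrixOp s (ML α β B) = mittagLeffler α β (matrixOp s B) :=
  have : CompleteSpace (Matrix (Fin s) (Fin s) ℝ) := FiniteDimensional.complete ℝ _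
  map_mittagLeffler hα β (matrixOp s) continuous_matrixOp B

lemma mittagLeffler_smul_matrixOp {α : ℝ} (hα : 0 < α) (β r : ℝ) (B : Matrix (Fin s) (Fin s) ℝ) :
    mittagLeffler α β (r • matrixOp s B) = matrixOp s (ML α β (r • B)) := by
  rw [matrixOp_ML hα, map_smul]

end Matrix

/-- An unbounded supremum of reals is `0` and `1 / 0 = 0`, so `c < 1 / ⨆ i, f i` with `0 ≤ c` forces
the family to be bounded. -/
lemma le_ciSup_and_mul_ciSup_lt_one {ι : Type*} {f : ι → ℝ} {c : ℝ} (hc : 0 ≤ c)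
    (h : c < 1 / ⨆ i, f i) : (∀ i, f i ≤ ⨆ i, f i) ∧ c * ⨆ i, f i < 1 := by
  have h_pos : 0 < ⨆ i, f i := one_div_pos.1 (hc.trans_lt h)
  have h_bdd : BddAbove (Set.range f) := by
    by_contra h_unbdd
    exact h_pos.ne' (Real.iSup_of_not_bddAbove h_unbdd)
  exact ⟨le_ciSup h_bdd, (lt_div_iff₀ h_pos).1 h⟩

theorem stmt12 (α : ℝ) (hα0 : 0 < α) (hα1 : α < 1) (s : ℕ)
    (A : Matrix (Fin s) (Fin s) ℝ)
    (hspec : ∀ μ ∈ spectrum ℂ (A.map (algebraMap ℝ ℂ)),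
      μ ≠ 0 ∧ α * Real.pi / 2 < |Complex.arg μ|)
    (Q : ℝ → Matrix (Fin s) (Fin s) ℝ) (hQc : ContinuousOn Q (Set.Ici 0))
    -- `sup_{t≥0} ‖Q(t)‖ < 1 / sup_{t≥0} t^{1-α} ∫₀ᵗ (t-τ)^{α-1} ‖E_{α,α}((t-τ)^α A)‖ τ^{α-1} dτ`
    (hQbd : ∃ c : ℝ, (∀ t : ℝ, 0 ≤ t → ‖Q t‖ ≤ c) ∧
      c < 1 / (⨆ t : {t : ℝ // 0 ≤ t}, (t : ℝ) ^ (1 - α) * ∫ τ in (0:ℝ)..(t : ℝ),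
        ((t : ℝ) - τ) ^ (α - 1) * ‖ML α α (((t : ℝ) - τ) ^ α • A)‖ * τ ^ (α - 1)))
    (g : ℝ → (Fin s → ℝ)) (hgc : ContinuousOn g (Set.Ici 0))
    (hgint : ∃ C : ℝ, ∀ t : ℝ, 0 ≤ t →
      t ^ (1 - α) * ∫ τ in (0:ℝ)..t,
        (t - τ) ^ (α - 1) * ‖(ML α α ((t - τ) ^ α • A)).mulVec (g τ)‖ ≤ C) :
    ∀ x₀ : Fin s → ℝ, ∃ φ : ℝ → (Fin s → ℝ),
      memC0inf α φ ∧
      (∀ t > (0:ℝ),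
        φ t = t ^ (α - 1) • (ML α α (t ^ α • A)).mulVec x₀
          + (∫ τ in (0:ℝ)..t, (t - τ) ^ (α - 1) •
              (ML α α ((t - τ) ^ α • A) * Q τ).mulVec (φ τ))
          + ∫ τ in (0:ℝ)..t, (t - τ) ^ (α - 1) •
              (ML α α ((t - τ) ^ α • A)).mulVec (g τ)) ∧
      (∀ ψ : ℝ → (Fin s → ℝ), memC0inf α ψ →
        (∀ t > (0:ℝ),
          ψ t = t ^ (α - 1) • (ML α α (t ^ α • A)).mulVec x₀
            + (∫ τ in (0:ℝ)..t, (t - τ) ^ (α - 1) •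
                (ML α α ((t - τ) ^ α • A) * Q τ).mulVec (ψ τ))
            + ∫ τ in (0:ℝ)..t, (t - τ) ^ (α - 1) •
                (ML α α ((t - τ) ^ α • A)).mulVec (g τ)) →
        ∀ t > (0:ℝ), ψ t = φ t) ∧
      Tendsto φ atTop (𝓝 0) := by
  obtain ⟨c, hc, hc_lt⟩ := hQbd
  obtain ⟨C, hC⟩ := hgint
  obtain ⟨hκ, hcκ⟩ := le_ciSup_and_mul_ciSup_lt_one ((norm_nonneg _).trans (hc 0 le_rfl)) hc_lt
  have h_general := stmt12_general (C := C) hα0 hα1 (matrixOp s A)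
    (continuous_matrixOp.comp_continuousOn hQc)
    (fun t ht => (norm_matrixOp (Q t)).trans_le (hc t ht))
    (fun t ht => by
      simpa only [weightedKernelMass, mittagLeffler_smul_matrixOp hα0, norm_matrixOp]
        using hκ ⟨t, ht⟩) hcκ hgc
    (by simpa only [mittagLeffler_smul_matrixOp hα0, matrixOp_apply] using hC)
  simpa only [memC0inf, MemWeightedC0, IsMildSolution, fracConv,
    mittagLeffler_smul_matrixOp hα0, matrixOp_apply, Function.comp_apply, gt_iff_lt,
    Matrix.mulVec_mulVec] using h_general
end

section
/- Let 0 < α < 1 and let A be any real s×s matrix. Then lim_{t→0⁺} t^{α-1} ‖E_{α,α}(t^α A)‖ = ∞ (the function tends to +∞ as t → 0⁺). Consequently, there exist no constants M, γ > 0 such that ‖t^{α-1} E_{α,α}(t^α A)‖ ≤ M e^{-γ t} for all t ∈ (0,∞). -/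
open Filter Topology MeasureTheory

attribute [local instance] Matrix.linftyOpNormedAddCommGroup Matrix.linftyOpNormedRing

/-!
Since `Γ` is bounded away from zero on `(0, ∞)`, the coefficients of `E_{α,β}` are bounded, so the
series has positive radius of convergence and `E_{α,β}(t ^ α • A) → E_{α,β}(0) = Γ(β)⁻¹ • 1 ≠ 0` as
`t → 0⁺`. The factor `t ^ (β - 1)` then forces the product to `+∞`, while every `M * exp (-(γ * t))`
stays bounded near `0`.
-/

section OfScalars

variable {𝕜 : Type*} (E : Type*) [NontriviallyNormedField 𝕜] [NormedRing E] [NormedAlgebra 𝕜 E]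

lemma one_le_radius_ofScalars_of_isBigO_one {c : ℕ → 𝕜} (hc : c =O[atTop] (fun _ ↦ (1 : ℝ))) :
    1 ≤ (FormalMultilinearSeries.ofScalars E c).radius := by
  have norm_le : ∀ᶠ n in atTop, ‖FormalMultilinearSeries.ofScalars E c n‖ ≤ ‖c n‖ :=
    (eventually_gt_atTop 0).mono fun n hn ↦ FormalMultilinearSeries.ofScalars_norm_le E c n hn
  have norm_isBigO : (fun n ↦ ‖FormalMultilinearSeries.ofScalars E c n‖) =O[atTop] c :=
    .of_bound' (norm_le.mono fun n ↦ (norm_norm (FormalMultilinearSeries.ofScalars E c n)).trans_le)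
  refine mod_cast FormalMultilinearSeries.le_radius_of_isBigO (r := 1) _ ?_
  simpa only [NNReal.coe_one, one_pow, mul_one] using norm_isBigO.trans hc

lemma continuousAt_ofScalarsSum_zero_of_isBigO_one [CompleteSpace E] {c : ℕ → 𝕜}
    (hc : c =O[atTop] (fun _ ↦ (1 : ℝ))) :
    ContinuousAt (FormalMultilinearSeries.ofScalarsSum (E := E) c) 0 :=
  (FormalMultilinearSeries.hasFPowerSeriesOnBall _
    (one_pos.trans_le (one_le_radius_ofScalars_of_isBigO_one E hc))).analyticAt.continuousAt

end OfScalars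

lemma exists_forall_pos_norm_inv_Gamma_le : ∃ C : ℝ, ∀ x > 0, ‖(Real.Gamma x)⁻¹‖ ≤ C := by
  obtain ⟨x₀, ⟨hx₀, -⟩, hmin⟩ := Real.exists_isMinOn_Gamma_Ioi
  refine ⟨(Real.Gamma x₀)⁻¹, fun x hx ↦ ?_⟩
  rw [Real.norm_of_nonneg (inv_nonneg.2 (Real.Gamma_pos_of_pos hx).le)]
  exact inv_anti₀ (Real.Gamma_pos_of_pos (one_pos.trans hx₀)) (hmin hx)

lemma isBigO_one_inv_Gamma_mul_add {α : ℝ} (hα : 0 < α) (β : ℝ) :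
    (fun k : ℕ ↦ (Real.Gamma (α * k + β))⁻¹) =O[atTop] (fun _ ↦ (1 : ℝ)) := by
  obtain ⟨C, hC⟩ := exists_forall_pos_norm_inv_Gamma_le
  have h_atTop : Tendsto (fun k : ℕ ↦ α * k + β) atTop atTop :=
    tendsto_atTop_add_const_right _ _ (tendsto_natCast_atTop_atTop.const_mul_atTop hα)
  refine Asymptotics.IsBigO.of_bound C ?_
  filter_upwards [h_atTop.eventually_gt_atTop 0] with k hk
  simpa using hC _ hk

section MittagLeffler

attribute [local instance] Matrix.linftyOpNormedAlgebra

variable (α β : ℝ) {s : ℕ}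

lemma ML_eq_ofScalarsSum :
    ML (s := s) α β =
      FormalMultilinearSeries.ofScalarsSum fun k : ℕ ↦ (Real.Gamma (α * k + β))⁻¹ :=
  (FormalMultilinearSeries.ofScalarsSum_eq_tsum _).symm

lemma ML_zero : ML α β (0 : Matrix (Fin s) (Fin s) ℝ) = (Real.Gamma β)⁻¹ • 1 := by
  simp [ML_eq_ofScalarsSum]

variable {α}

lemma continuousAt_ML_zero (hα : 0 < α) : ContinuousAt (ML (s := s) α β) 0 := by
  rw [ML_eq_ofScalarsSum]
  exact continuousAt_ofScalarsSum_zero_of_isBigO_one _ (isBigO_one_inv_Gamma_mul_add hα β)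

lemma tendsto_ML_rpow_smul_nhdsGT_zero (hα : 0 < α) (A : Matrix (Fin s) (Fin s) ℝ) :
    Tendsto (fun t : ℝ ↦ ML α β (t ^ α • A)) (𝓝[>] 0) (𝓝 ((Real.Gamma β)⁻¹ • 1)) := by
  have h_arg : Tendsto (fun t : ℝ ↦ t ^ α • A) (𝓝 0) (𝓝 0) := by
    simpa [Real.zero_rpow hα.ne'] using
      (Real.continuousAt_rpow_const 0 α (Or.inr hα.le)).tendsto.smul_const A
  rw [← ML_zero α β]
  exact (continuousAt_ML_zero β hα).tendsto.comp (h_arg.mono_left nhdsWithin_le_nhds)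

end MittagLeffler

lemma not_forall_pos_le_of_tendsto_nhdsGT_atTop {f g : ℝ → ℝ} (hf : Tendsto f (𝓝[>] 0) atTop)
    (hg : ContinuousWithinAt g (Set.Ioi 0) 0) : ¬ ∀ t > 0, f t ≤ g t := fun hfg ↦
  not_tendsto_nhds_of_tendsto_atTop
    (tendsto_atTop_mono' (𝓝[>] 0) (eventually_mem_nhdsWithin.mono hfg) hf) (g 0) hg

/-- For `β < 0` some `α * k + β` may be a pole of `Γ`; there `Real.Gamma` is `0`, so the coefficient
`(Real.Gamma (α * k + β))⁻¹ = 0` is the value of the entire function `1 / Γ`. -/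
theorem stmt14_general (α β : ℝ) (hα : 0 < α) (hβ : β < 1) (hβ_pole : ∀ m : ℕ, β ≠ -m) (s : ℕ)
    (hs : 1 ≤ s) (A : Matrix (Fin s) (Fin s) ℝ) :
    Tendsto (fun t : ℝ ↦ t ^ (β - 1) * ‖ML α β (t ^ α • A)‖) (𝓝[>] 0) atTop ∧
    ¬ ∃ M γ : ℝ, ∀ t > (0 : ℝ),
        t ^ (β - 1) * ‖ML α β (t ^ α • A)‖ ≤ M * Real.exp (-(γ * t)) := by
  have : Nonempty (Fin s) := ⟨⟨0, hs⟩⟩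
  have limit_ne_zero : (Real.Gamma β)⁻¹ • (1 : Matrix (Fin s) (Fin s) ℝ) ≠ 0 :=
    smul_ne_zero (inv_ne_zero (Real.Gamma_ne_zero hβ_pole)) one_ne_zero
  have blow_up : Tendsto (fun t : ℝ ↦ t ^ (β - 1) * ‖ML α β (t ^ α • A)‖) (𝓝[>] 0) atTop :=
    (tendsto_rpow_neg_nhdsGT_zero (sub_neg.2 hβ)).atTop_mul_pos (norm_pos_iff.2 limit_ne_zero)
      (tendsto_ML_rpow_smul_nhdsGT_zero β hα A).norm
  refine ⟨blow_up, fun ⟨M, γ, hbound⟩ ↦ ?_⟩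
  have bound_continuous : Continuous fun t : ℝ ↦ M * Real.exp (-(γ * t)) := by fun_prop
  exact not_forall_pos_le_of_tendsto_nhdsGT_atTop blow_up
    bound_continuous.continuousWithinAt hbound

theorem stmt14 (α : ℝ) (hα0 : 0 < α) (hα1 : α < 1) (s : ℕ) (hs : 1 ≤ s)
    (A : Matrix (Fin s) (Fin s) ℝ) :
    Tendsto (fun t : ℝ => t ^ (α - 1) * ‖ML α α (t ^ α • A)‖) (𝓝[>] 0) atTop ∧
    ¬ ∃ M γ : ℝ, 0 < M ∧ 0 < γ ∧ ∀ t > (0:ℝ),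
        t ^ (α - 1) * ‖ML α α (t ^ α • A)‖ ≤ M * Real.exp (-(γ * t)) := by
  obtain ⟨blow_up, no_bound⟩ := stmt14_general α α hα0 hα1
    (fun m ↦ ((neg_nonpos.2 m.cast_nonneg).trans_lt hα0).ne') s hs A
  exact ⟨blow_up, fun ⟨M, γ, _, _, hbound⟩ ↦ no_bound ⟨M, γ, hbound⟩⟩
end
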